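/- arXiv:2312.12311 — 2 statements merged into one kernel-verified Lean document; each statement's English description precedes it below -/
import Mathlib

section
/- Let P be the group with presentation ⟨g₁, g₂, g₃, g_{β₁}, g_{β₂}, g_{β₃} | g_i g_j = g_j g_i for i, j ∈ {1,2,3}, g_{β_i}² = g_i for i ∈ {1,2,3}, g_{β_i} g_j g_{β_i}⁻¹ = g_j⁻¹ for i ≠ j in {1,2,3}, g_{β₃} = g₁ g_{β₂} g_{β₁}⟩. Then the subgroup Λ of P generated by g₁, g₂, g₃ is a normal subgroup, Λ is free abelian of rank 3 with basis {g₁, g₂, g₃}, and the quotient P/Λ is isomorphic to ℤ/2 × ℤ/2, generated by the images of g_{β₁} and g_{β₂}. -/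
/-!
Each coordinate axis of the flat torus gives an action of `P` on a line, that is, a homomorphism
from `P` to the infinite dihedral group in which one of `g₁, g₂, g₃` becomes a nontrivial
translation and the other two act trivially. The three actions together show that `g₁, g₂, g₃` are
independent. Conjugation by any generator sends each `gᵢ` to `gᵢ` or `gᵢ⁻¹`, so `Λ` is normal.
Modulo `Λ`, the elements `g_{β₁}`, `g_{β₂}` and `g_{β₂} g_{β₁} ≡ g_{β₃}` are involutions, so
`g_{β₁}` and `g_{β₂}` commute and the quotient has no more than the four elements which the
holonomy homomorphism onto `ℤ/2 × ℤ/2` distinguishes.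
-/

namespace FlatZ2Z2

/-- Generators: `0, 1, 2` are `g₁, g₂, g₃`, and `3, 4, 5` are `g_{β₁}, g_{β₂}, g_{β₃}`. -/
abbrev F (i : Fin 6) : FreeGroup (Fin 6) := FreeGroup.of i

/-- The embedding of the indices of `g₁, g₂, g₃` into the generator indices. -/
abbrev ι (i : Fin 3) : Fin 6 := i.castLE (by norm_num)

/-- Relations of `π₁(T³/(ℤ₂ × ℤ₂))` (the Hantzsche–Wendt manifold): the `gᵢ` commute,
`g_{βᵢ}² = gᵢ` for `i ∈ {1,2,3}`, `g_{βᵢ} g_j g_{βᵢ}⁻¹ = g_j⁻¹` for `i ≠ j`, and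
`g_{β₃} = g₁ g_{β₂} g_{β₁}`. -/
def rels : Set (FreeGroup (Fin 6)) :=
  {r | ∃ i j : Fin 3, r = F (ι i) * F (ι j) * (F (ι i))⁻¹ * (F (ι j))⁻¹} ∪
  {F 3 * F 3 * (F 0)⁻¹,
   F 4 * F 4 * (F 1)⁻¹,
   F 5 * F 5 * (F 2)⁻¹,
   F 3 * F 1 * (F 3)⁻¹ * F 1,
   F 3 * F 2 * (F 3)⁻¹ * F 2,
   F 4 * F 0 * (F 4)⁻¹ * F 0,
   F 4 * F 2 * (F 4)⁻¹ * F 2,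
   F 5 * F 0 * (F 5)⁻¹ * F 0,
   F 5 * F 1 * (F 5)⁻¹ * F 1,
   F 5 * (F 3)⁻¹ * (F 4)⁻¹ * (F 0)⁻¹}

/-- The fundamental group `P = π₁(T³/(ℤ₂ × ℤ₂))` given by the above presentation. -/
abbrev P := PresentedGroup rels

/-- The images of the generators in `P`. -/
def g (i : Fin 6) : P := PresentedGroup.of i

/-- The subgroup `Λ` generated by `g₁, g₂, g₃`. -/
def Λ : Subgroup P := Subgroup.closure {g 0, g 1, g 2}

open Multiplicative

section ProdHom

variable {A B M : Type*} [AddMonoid A] [AddMonoid B] [Monoid M] {f : Multiplicative A →* M}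
  {f' : Multiplicative B →* M}

/-- The homomorphism out of a direct sum of two additive monoids, written multiplicatively, given
by homomorphisms with commuting images on the two summands. -/
def prodHom (f : Multiplicative A →* M) (f' : Multiplicative B →* M)
    (comm : ∀ a b, Commute (f a) (f' b)) : Multiplicative (A × B) →* M :=
  (f.noncommCoprod f' comm).comp (MulEquiv.prodMultiplicative (G := A) (H := B) : _ →* _)

@[simp]
theorem prodHom_ofAdd (comm : ∀ a b, Commute (f a) (f' b)) (a : A) (b : B) :
    prodHom f f' comm (ofAdd (a, b)) = f (ofAdd a) * f' (ofAdd b) :=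
  rfl

theorem commute_prodHom (comm : ∀ a b, Commute (f a) (f' b)) {x : M}
    (hf : ∀ a, Commute x (f a)) (hf' : ∀ b, Commute x (f' b)) (v : Multiplicative (A × B)) :
    Commute x (prodHom f f' comm v) :=
  (hf _).mul_right (hf' _)

end ProdHom

section GroupLemmas

variable {G : Type*} [Group G]

theorem mem_normalizer_zpowers_of_conj_eq_or_eq_inv {x a : G}
    (h : x * a * x⁻¹ = a ∨ x * a * x⁻¹ = a⁻¹) :
    x ∈ Subgroup.normalizer (Subgroup.zpowers a : Set G) := by
  rw [Subgroup.mem_normalizer_iff_map_conj_eq, MonoidHom.map_zpowers]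
  rcases h with h | h <;> simp [h]

theorem closure_triple_eq_sup_zpowers (a b c : G) :
    Subgroup.closure {a, b, c} =
      Subgroup.zpowers a ⊔ (Subgroup.zpowers b ⊔ Subgroup.zpowers c) := by
  simp only [Set.insert_eq, Subgroup.closure_union, Subgroup.zpowers_eq_closure]

theorem commute_of_sq_eq_one {a b : G} (ha : a ^ 2 = 1) (hb : b ^ 2 = 1)
    (hab : (a * b) ^ 2 = 1) : Commute a b := by
  have inv_eq_self {x : G} (hx : x ^ 2 = 1) : x⁻¹ = x :=
    inv_eq_of_mul_eq_one_left (by rwa [← sq])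
  calc a * b = (a * b)⁻¹ := (inv_eq_self hab).symm
    _ = b⁻¹ * a⁻¹ := mul_inv_rev a b
    _ = b * a := by rw [inv_eq_self ha, inv_eq_self hb]

theorem range_prodHom {A B : Type*} [AddGroup A] [AddGroup B] {f : Multiplicative A →* G}
    {f' : Multiplicative B →* G} (comm : ∀ a b, Commute (f a) (f' b)) :
    (prodHom f f' comm).range = f.range ⊔ f'.range := by
  rw [← MonoidHom.noncommCoprod_range f f' comm]
  exact SetLike.coe_injective
    ((MulEquiv.prodMultiplicative (G := A) (H := B)).surjective.range_comp _)

theorem commute_zpowersHom {a b : G} (hab : Commute a b) (x y : Multiplicative ℤ) :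
    Commute (zpowersHom G a x) (zpowersHom G b y) :=
  hab.zpow_zpow x.toAdd y.toAdd

/-- The homomorphism `ℤ/n → G` sending `1` to an element `a` with `a ^ n = 1`. -/
def zmodPowersHom {n : ℕ} {a : G} (ha : a ^ n = 1) : Multiplicative (ZMod n) →* G :=
  AddMonoidHom.toMultiplicativeLeft <|
    ZMod.lift n ⟨zmultiplesHom (Additive G) (.ofMul a), by simpa [← ofMul_pow] using ha⟩

theorem zmodPowersHom_ofAdd_intCast {n : ℕ} {a : G} (ha : a ^ n = 1) (k : ℤ) :
    zmodPowersHom ha (ofAdd (k : ZMod n)) = a ^ k := by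
  simp [zmodPowersHom]

theorem zmodPowersHom_ofAdd_one {n : ℕ} {a : G} (ha : a ^ n = 1) :
    zmodPowersHom ha (ofAdd 1) = a := by
  simpa using zmodPowersHom_ofAdd_intCast ha 1

theorem commute_zmodPowersHom {m n : ℕ} {a b : G} (ha : a ^ m = 1) (hb : b ^ n = 1)
    (hab : Commute a b) (x : Multiplicative (ZMod m)) (y : Multiplicative (ZMod n)) :
    Commute (zmodPowersHom ha x) (zmodPowersHom hb y) := by
  obtain ⟨k, hk⟩ := ZMod.intCast_surjective x.toAdd
  obtain ⟨l, hl⟩ := ZMod.intCast_surjective y.toAdd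
  rw [← ofAdd_toAdd x, ← ofAdd_toAdd y, ← hk, ← hl, zmodPowersHom_ofAdd_intCast,
    zmodPowersHom_ofAdd_intCast]
  exact hab.zpow_zpow k l

end GroupLemmas

/-- The embedding of the indices of `g_{β₁}, g_{β₂}, g_{β₃}` into the generator indices, the
counterpart of `ι`. -/
abbrev β (i : Fin 3) : Fin 6 := i.natAdd 3

/-- The defining relations of `P`, as a condition on a family of six elements of a group. -/
structure SatisfiesRels {G : Type*} [Group G] (f : Fin 6 → G) : Prop where
  comm : ∀ i j, f (ι i) * f (ι j) = f (ι j) * f (ι i)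
  sq : ∀ i, f (β i) * f (β i) = f (ι i)
  conj : ∀ i j, i ≠ j → f (β i) * f (ι j) * (f (β i))⁻¹ = (f (ι j))⁻¹
  prod : f 5 = f 0 * f 4 * f 3

theorem satisfiesRels_iff {G : Type*} [Group G] {f : Fin 6 → G} :
    SatisfiesRels f ↔ ∀ r ∈ rels, FreeGroup.lift f r = 1 := by
  simp only [rels, Set.mem_union, Set.mem_ofPred_eq, or_imp, forall_and, forall_exists_index,
    forall_comm (α := FreeGroup _), Set.mem_insert_iff, Set.mem_singleton_iff, forall_eq,
    ← commutatorElement_def, map_commutatorElement, commutatorElement_eq_one_iff_mul_comm,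
    map_mul, map_inv, FreeGroup.lift_apply_of, mul_eq_one_iff_eq_inv, inv_inv]
  constructor
  · intro h
    exact ⟨h.comm, h.sq 0, h.sq 1, h.sq 2, h.conj 0 1 (by decide), h.conj 0 2 (by decide),
      h.conj 1 0 (by decide), h.conj 1 2 (by decide), h.conj 2 0 (by decide),
      h.conj 2 1 (by decide), by simpa only [mul_inv_eq_iff_eq_mul] using h.prod⟩
  · rintro ⟨comm, sq₁, sq₂, sq₃, conj₁₂, conj₁₃, conj₂₁, conj₂₃, conj₃₁, conj₃₂, prod⟩
    refine ⟨comm, fun i ↦ ?_, fun i j hij ↦ ?_, by simpa only [mul_inv_eq_iff_eq_mul] using prod⟩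
    · fin_cases i
      exacts [sq₁, sq₂, sq₃]
    · fin_cases i <;> fin_cases j <;> first | contradiction | assumption

theorem satisfiesRels_g : SatisfiesRels g := by
  rw [satisfiesRels_iff]
  intro r hr
  have : FreeGroup.lift g = PresentedGroup.mk rels :=
    FreeGroup.ext_hom _ _ fun _ ↦ FreeGroup.lift_apply_of
  rw [this]
  exact PresentedGroup.one_of_mem hr

/-- The homomorphism from `P` sending the generators to a family that satisfies its relations. -/
def lift {G : Type*} [Group G] {f : Fin 6 → G} (hf : SatisfiesRels f) : P →* G :=
  PresentedGroup.toGroup (satisfiesRels_iff.1 hf)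

@[simp]
theorem lift_g {G : Type*} [Group G] {f : Fin 6 → G} (hf : SatisfiesRels f) (i : Fin 6) :
    lift hf (g i) = f i :=
  PresentedGroup.toGroup.of _

theorem conj_g_ι (i : Fin 6) (j : Fin 3) :
    g i * g (ι j) * (g i)⁻¹ = g (ι j) ∨ g i * g (ι j) * (g i)⁻¹ = (g (ι j))⁻¹ := by
  induction i using Fin.addCases (m := 3) (n := 3) with
  | left k => exact .inl (mul_inv_eq_of_eq_mul (satisfiesRels_g.comm k j))
  | right k =>
    rcases eq_or_ne k j with rfl | hkj
    · left
      rw [← satisfiesRels_g.sq]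
      group
    · exact .inr (satisfiesRels_g.conj k j hkj)

theorem normal_zpowers_g_ι (j : Fin 3) : (Subgroup.zpowers (g (ι j))).Normal := by
  rw [← Subgroup.normalizer_eq_top_iff, Subgroup.eq_top_iff']
  exact PresentedGroup.generated_by rels _ fun i ↦
    mem_normalizer_zpowers_of_conj_eq_or_eq_inv (conj_g_ι i j)

instance normal_Λ : Λ.Normal := by
  have : (Subgroup.zpowers (g 0)).Normal := normal_zpowers_g_ι 0
  have : (Subgroup.zpowers (g 1)).Normal := normal_zpowers_g_ι 1
  have : (Subgroup.zpowers (g 2)).Normal := normal_zpowers_g_ι 2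
  rw [Λ, closure_triple_eq_sup_zpowers]
  infer_instance

theorem g_ι_mem_Λ (j : Fin 3) : g (ι j) ∈ Λ :=
  Subgroup.subset_closure (by fin_cases j <;> simp [ι])

theorem commute_g_ι (i j : Fin 3) : Commute (g (ι i)) (g (ι j)) :=
  satisfiesRels_g.comm i j

/-- The homomorphism `ℤ³ → P` sending the standard basis to `g₁, g₂, g₃`. -/
def latticeHom : Multiplicative (ℤ × ℤ × ℤ) →* P :=
  prodHom (zpowersHom P (g 0))
    (prodHom (zpowersHom P (g 1)) (zpowersHom P (g 2)) (commute_zpowersHom (commute_g_ι 1 2)))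
    fun a ↦ commute_prodHom _ (commute_zpowersHom (commute_g_ι 0 1) a)
      (commute_zpowersHom (commute_g_ι 0 2) a)

theorem latticeHom_ofAdd (a b c : ℤ) :
    latticeHom (ofAdd (a, b, c)) = g 0 ^ a * (g 1 ^ b * g 2 ^ c) :=
  rfl

theorem range_latticeHom : latticeHom.range = Λ := by
  rw [latticeHom, range_prodHom, range_prodHom, Λ, closure_triple_eq_sup_zpowers]
  rfl

open DihedralGroup in
/-- The isometries of the three coordinate axes induced by the generators of `P`: the `i`-th
generator acts on the `k`-th axis by `axisGen k i`. The unit of length is half a lattice vector, so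
that `g_k` is the translation `r 2` and its square root `g_{β_k}` is `r 1`, while the other two
`g_{βⱼ}` are reflections with centers chosen to satisfy `g_{β₃} = g₁ g_{β₂} g_{β₁}`. -/
def axisGen : Fin 3 → Fin 6 → DihedralGroup 0 :=
  ![![r 2, 1, 1, r 1, sr 0, sr (-1)],
    ![1, r 2, 1, sr 0, r 1, sr (-1)],
    ![1, 1, r 2, sr 1, sr 0, r 1]]

theorem satisfiesRels_axisGen (k : Fin 3) : SatisfiesRels (axisGen k) where
  comm := by decide +revert
  sq := by decide +revert
  conj := by decide +revert
  prod := by decide +revert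

/-- The action of `P` on the `k`-th coordinate axis. -/
def axisHom (k : Fin 3) : P →* DihedralGroup 0 := lift (satisfiesRels_axisGen k)

theorem axisHom_latticeHom_ofAdd (a b c : ℤ) (k : Fin 3) :
    axisHom k (latticeHom (ofAdd (a, b, c))) = DihedralGroup.r (2 * Int.cast (![a, b, c] k)) := by
  fin_cases k <;> simp [latticeHom_ofAdd, axisHom, axisGen]

theorem latticeHom_injective : Function.Injective latticeHom := by
  rw [injective_iff_map_eq_one]
  intro v hv
  induction v with | ofAdd v =>
  obtain ⟨a, b, c⟩ := v
  have hzero (k : Fin 3) : ![a, b, c] k = 0 := by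
    have h := axisHom_latticeHom_ofAdd a b c k
    rw [hv, map_one, DihedralGroup.one_def, DihedralGroup.r.injEq] at h
    simpa using h.symm
  obtain ⟨rfl, rfl, rfl⟩ : a = 0 ∧ b = 0 ∧ c = 0 := ⟨hzero 0, hzero 1, hzero 2⟩
  rfl

/-- The isomorphism `ℤ³ ≃ Λ` sending the standard basis to `g₁, g₂, g₃`. -/
noncomputable def latticeEquiv : Multiplicative (ℤ × ℤ × ℤ) ≃* Λ :=
  (MonoidHom.ofInjective latticeHom_injective).trans (MulEquiv.subgroupCongr range_latticeHom)

theorem coe_latticeEquiv (v : Multiplicative (ℤ × ℤ × ℤ)) :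
    (latticeEquiv v : P) = latticeHom v :=
  rfl

/-- The holonomies of the generators, with `g_{β₁}` and `g_{β₂}` as the basis of `ℤ/2 × ℤ/2`. -/
def holonomyGen : Fin 6 → Multiplicative (ZMod 2 × ZMod 2) :=
  ![1, 1, 1, ofAdd (1, 0), ofAdd (0, 1), ofAdd (1, 1)]

theorem satisfiesRels_holonomyGen : SatisfiesRels holonomyGen where
  comm := by decide
  sq := by decide
  conj := by decide
  prod := by decide

/-- The holonomy homomorphism, which records the linear part of the action of `P` on `ℝ³`. -/
def holonomy : P →* Multiplicative (ZMod 2 × ZMod 2) := lift satisfiesRels_holonomyGen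

theorem holonomy_g (i : Fin 6) : holonomy (g i) = holonomyGen i :=
  lift_g _ i

theorem holonomy_surjective : Function.Surjective holonomy := by
  have h : Function.Surjective holonomyGen := by decide
  intro v
  obtain ⟨i, rfl⟩ := h v
  exact ⟨g i, holonomy_g i⟩

theorem mk_g_ι (j : Fin 3) : (g (ι j) : P ⧸ Λ) = 1 :=
  (QuotientGroup.eq_one_iff _).2 (g_ι_mem_Λ j)

theorem mk_g_β_sq (i : Fin 3) : (g (β i) : P ⧸ Λ) ^ 2 = 1 := by
  rw [sq, ← QuotientGroup.mk_mul, satisfiesRels_g.sq, mk_g_ι]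

theorem mk_g_five : (g 5 : P ⧸ Λ) = g 4 * g 3 := by
  have h : (g 0 : P ⧸ Λ) = 1 := mk_g_ι 0
  rw [satisfiesRels_g.prod, QuotientGroup.mk_mul, QuotientGroup.mk_mul, h, one_mul]

theorem commute_mk_g : Commute (g 3 : P ⧸ Λ) (g 4) :=
  (commute_of_sq_eq_one (mk_g_β_sq 1) (mk_g_β_sq 0) (mk_g_five ▸ mk_g_β_sq 2)).symm

/-- The homomorphism `ℤ/2 × ℤ/2 → P/Λ` sending the two generators to the classes of `g_{β₁}` and
`g_{β₂}`, the inverse of the map induced by the holonomy. -/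
def holonomyInv : Multiplicative (ZMod 2 × ZMod 2) →* P ⧸ Λ :=
  prodHom (zmodPowersHom (mk_g_β_sq 0)) (zmodPowersHom (mk_g_β_sq 1))
    (commute_zmodPowersHom _ _ commute_mk_g)

theorem holonomyInv_comp_holonomy : holonomyInv.comp holonomy = QuotientGroup.mk' Λ := by
  refine PresentedGroup.ext fun i ↦ ?_
  change holonomyInv (holonomy (g i)) = (g i : P ⧸ Λ)
  rw [holonomy_g]
  fin_cases i
  · exact (map_one _).trans (mk_g_ι 0).symm
  · exact (map_one _).trans (mk_g_ι 1).symm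
  · exact (map_one _).trans (mk_g_ι 2).symm
  · simp [holonomyGen, holonomyInv, zmodPowersHom_ofAdd_one]
  · simp [holonomyGen, holonomyInv, zmodPowersHom_ofAdd_one]
  · simp [holonomyGen, holonomyInv, zmodPowersHom_ofAdd_one, mk_g_five, commute_mk_g.eq]

theorem ker_holonomy : holonomy.ker = Λ := by
  apply le_antisymm
  · intro x hx
    rw [← QuotientGroup.ker_mk' Λ, ← holonomyInv_comp_holonomy]
    simp [MonoidHom.mem_ker.1 hx, MonoidHom.mem_ker]
  · refine (Subgroup.closure_le _).2 ?_
    rintro y (rfl | rfl | rfl) <;> exact holonomy_g _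

/-- `Λ` is normal in `P`, `Λ` is free abelian of rank 3 with basis
`{g₁, g₂, g₃}`, and there is a surjection `P → ℤ/2 × ℤ/2` with kernel `Λ` sending
`g_{β₁}` and `g_{β₂}` to the two generators; i.e. `P/Λ ≅ ℤ/2 × ℤ/2`, generated by the
images of `g_{β₁}` and `g_{β₂}`. -/
theorem lattice_normal_free_abelian_quotient_Z2Z2 :
    Λ.Normal ∧
    (∃ e : Multiplicative (ℤ × ℤ × ℤ) ≃* Λ,
      ((e (Multiplicative.ofAdd (1, 0, 0)) : Λ) : P) = g 0 ∧
      ((e (Multiplicative.ofAdd (0, 1, 0)) : Λ) : P) = g 1 ∧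
      ((e (Multiplicative.ofAdd (0, 0, 1)) : Λ) : P) = g 2) ∧
    (∃ φ : P →* Multiplicative (ZMod 2 × ZMod 2),
      Function.Surjective φ ∧ φ.ker = Λ ∧
      φ (g 3) = Multiplicative.ofAdd (1, 0) ∧ φ (g 4) = Multiplicative.ofAdd (0, 1)) := by
  refine ⟨normal_Λ, ⟨latticeEquiv, ?_, ?_, ?_⟩,
    holonomy, holonomy_surjective, ker_holonomy, holonomy_g 3, holonomy_g 4⟩
  all_goals simp [coe_latticeEquiv, latticeHom_ofAdd]

end FlatZ2Z2
end

section
/- Let P be the group with presentation ⟨g₁, g₂, g₃, g_{β₁}, g_{β₂}, g_{β₃} | g_i g_j = g_j g_i for i, j ∈ {1,2,3}, g_{β_i}² = g_i for i ∈ {1,2,3}, g_{β_i} g_j g_{β_i}⁻¹ = g_j⁻¹ for i ≠ j in {1,2,3}, g_{β₃} = g₁ g_{β₂} g_{β₁}⟩. Then P is torsion-free: every element of P of finite order is the identity. -/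
namespace TorsionFreeZ2Z2

/-- Generators: `0, 1, 2` are `g₁, g₂, g₃`, and `3, 4, 5` are `g_{β₁}, g_{β₂}, g_{β₃}`. -/
abbrev F (i : Fin 6) : FreeGroup (Fin 6) := FreeGroup.of i

/-- The embedding of the indices of `g₁, g₂, g₃` into the generator indices. -/
abbrev ι (i : Fin 3) : Fin 6 := i.castLE (by norm_num)

/-- Relations of `π₁(T³/(ℤ₂ × ℤ₂))` (the Hantzsche–Wendt manifold): the `gᵢ` commute,
`g_{βᵢ}² = gᵢ` for `i ∈ {1,2,3}`, `g_{βᵢ} g_j g_{βᵢ}⁻¹ = g_j⁻¹` for `i ≠ j`, and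
`g_{β₃} = g₁ g_{β₂} g_{β₁}`. -/
def rels : Set (FreeGroup (Fin 6)) :=
  {r | ∃ i j : Fin 3, r = F (ι i) * F (ι j) * (F (ι i))⁻¹ * (F (ι j))⁻¹} ∪
  {F 3 * F 3 * (F 0)⁻¹,
   F 4 * F 4 * (F 1)⁻¹,
   F 5 * F 5 * (F 2)⁻¹,
   F 3 * F 1 * (F 3)⁻¹ * F 1,
   F 3 * F 2 * (F 3)⁻¹ * F 2,
   F 4 * F 0 * (F 4)⁻¹ * F 0,
   F 4 * F 2 * (F 4)⁻¹ * F 2,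
   F 5 * F 0 * (F 5)⁻¹ * F 0,
   F 5 * F 1 * (F 5)⁻¹ * F 1,
   F 5 * (F 3)⁻¹ * (F 4)⁻¹ * (F 0)⁻¹}

/-- The fundamental group `P = π₁(T³/(ℤ₂ × ℤ₂))` given by the above presentation. -/
abbrev P := PresentedGroup rels

/-!
Write `b₁, b₂, b₃` for the screw motions `g_{βᵢ}`; they generate `P`, and each inverts the squares
`gⱼ = bⱼ²` of the other two. Hence the subgroup generated by the three squares is normal, and modulo
it the `bᵢ` become involutions with `b₃ = b₂ b₁`, so the quotient has at most the four elements
`1, b₁, b₂, b₃`. Every element of `P` is therefore `g₁ⁱ g₂ʲ g₃ᵏ` or `g₁ⁱ g₂ʲ g₃ᵏ bₗ`.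

On the other hand `P` acts on the `l`-th coordinate axis through the infinite dihedral group, with
`bₗ` acting as a unit translation and the other two screw motions as reflections. So `g₁ⁱ g₂ʲ g₃ᵏ`
translates the axes by `2i, 2j, 2k`, while `g₁ⁱ g₂ʲ g₃ᵏ bₗ` translates the `l`-th axis by an odd
number. A translation of finite order is trivial, which forces `i = j = k = 0` in the first case and
is impossible in the second.
-/

open Subgroup DihedralGroup

section Group

variable {G : Type*} [Group G]

theorem eq_zero_of_isOfFinOrder_zpow {a : G} (ha : ¬IsOfFinOrder a) {m : ℤ}
    (h : IsOfFinOrder (a ^ m)) : m = 0 := by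
  obtain ⟨k, hk, hak⟩ := isOfFinOrder_iff_zpow_eq_one.mp h
  rw [← zpow_mul, ← zpow_zero a] at hak
  exact (mul_eq_zero.mp (injective_zpow_iff_not_isOfFinOrder.mpr ha hak)).resolve_right hk

theorem mem_of_mem_closure_pair_of_sq_eq_one {u v x : G} (hu : u ^ 2 = 1) (hv : v ^ 2 = 1)
    (hvu : (v * u) ^ 2 = 1) (hx : x ∈ closure {u, v}) : x ∈ ({1, u, v, v * u} : Set G) := by
  rw [sq] at hu hv
  have hu_inv : u⁻¹ = u := inv_eq_of_mul_eq_one_left hu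
  have hv_inv : v⁻¹ = v := inv_eq_of_mul_eq_one_left hv
  have hcomm : u * v = v * u := by
    have hvu_inv : (v * u)⁻¹ = v * u := inv_eq_of_mul_eq_one_left (by rwa [← sq])
    rwa [mul_inv_rev, hu_inv, hv_inv] at hvu_inv
  have hu_mul {y : G} (hy : y ∈ ({1, u, v, v * u} : Set G)) :
      u * y ∈ ({1, u, v, v * u} : Set G) := by
    have huvu : u * (v * u) = v := by rw [← hcomm, ← mul_assoc, hu, one_mul]
    grind
  have hv_mul {y : G} (hy : y ∈ ({1, u, v, v * u} : Set G)) :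
      v * y ∈ ({1, u, v, v * u} : Set G) := by
    have hvvu : v * (v * u) = u := by rw [← mul_assoc, hv, one_mul]
    grind
  induction hx using closure_induction_left with
  | one => simp
  | mul_left s hs y _ hy =>
    rcases hs with rfl | rfl
    exacts [hu_mul hy, hv_mul hy]
  | inv_mul_cancel s hs y _ hy =>
    rcases hs with rfl | rfl
    exacts [hu_inv.symm ▸ hu_mul hy, hv_inv.symm ▸ hv_mul hy]

theorem zpowers_normal_of_semiconjBy {S : Set G} (hS : closure S = ⊤) {a : G}
    (h : ∀ s ∈ S, SemiconjBy s a a ∨ SemiconjBy s a a⁻¹) : (zpowers a).Normal := by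
  rw [← normalizer_eq_top_iff, eq_top_iff, ← hS, closure_le]
  intro s hs
  rw [SetLike.mem_coe, mem_normalizer_iff_map_conj_eq, MonoidHom.map_zpowers]
  rcases h s hs with h | h <;> simp [h.eq]

theorem zpowers_sq_normal {κ : Type*} {b : κ → G} {S : Set κ} (hgen : closure (b '' S) = ⊤)
    (hconj : ∀ i j, i ≠ j → SemiconjBy (b i) (b j ^ 2) (b j ^ 2)⁻¹) (j : κ) :
    (zpowers (b j ^ 2)).Normal := by
  refine zpowers_normal_of_semiconjBy hgen ?_
  rintro _ ⟨i, -, rfl⟩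
  rcases eq_or_ne i j with rfl | hij
  · exact .inl (Commute.self_pow _ _)
  · exact .inr (hconj i j hij)

/-- The product `g₁^(n 0) g₂^(n 1) g₃^(n 2)` of powers of the squares `gᵢ = (b i) ^ 2`: the
translation with coordinates `n` when `b` lists the screw motions. -/
def sqZPowProd (b : Fin 3 → G) (n : Fin 3 → ℤ) : G :=
  (b 0 ^ 2) ^ n 0 * (b 1 ^ 2) ^ n 1 * (b 2 ^ 2) ^ n 2

/-- The subgroup generated by the squares `gᵢ = (b i) ^ 2`: the lattice of translations when `b`
lists the screw motions. -/
def sqSubgroup (b : Fin 3 → G) : Subgroup G :=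
  ⨆ i, zpowers (b i ^ 2)

theorem sq_mem_sqSubgroup (b : Fin 3 → G) (i : Fin 3) : b i ^ 2 ∈ sqSubgroup b :=
  mem_iSup_of_mem i (mem_zpowers _)

variable {b : Fin 3 → G}

theorem map_sqZPowProd {H : Type*} [Group H] (f : G →* H) {l : Fin 3}
    (hf : ∀ i ≠ l, f (b i) ^ 2 = 1) (n : Fin 3 → ℤ) :
    f (sqZPowProd b n) = f (b l) ^ (2 * n l) := by
  have hpow (i : Fin 3) : f ((b i ^ 2) ^ n i) = if i = l then f (b l) ^ (2 * n l) else 1 := by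
    split_ifs with hi
    · rw [hi, map_zpow, map_pow, zpow_mul, zpow_ofNat]
    · rw [map_zpow, map_pow, hf i hi, one_zpow]
  rw [sqZPowProd, map_mul, map_mul, hpow, hpow, hpow]
  fin_cases l <;> simp

theorem sqSubgroup_normal (hb : ∀ i, (zpowers (b i ^ 2)).Normal) : (sqSubgroup b).Normal := by
  rw [sqSubgroup, iSup_fin_three]
  infer_instance

theorem exists_sqZPowProd_eq (hb : ∀ i, (zpowers (b i ^ 2)).Normal) {x : G}
    (hx : x ∈ sqSubgroup b) : ∃ n, sqZPowProd b n = x := by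
  rw [sqSubgroup, iSup_fin_three, mem_sup_of_normal_right] at hx
  obtain ⟨y, hy, _, ⟨k, rfl⟩, rfl⟩ := hx
  obtain ⟨_, ⟨i, rfl⟩, _, ⟨j, rfl⟩, rfl⟩ := mem_sup_of_normal_right.mp hy
  exact ⟨![i, j, k], rfl⟩

theorem mem_sqSubgroup_or_exists_mul_inv_mem (hgen : closure {b 0, b 1} = ⊤)
    (hnormal : (sqSubgroup b).Normal) (hb : b 2 = b 0 ^ 2 * b 1 * b 0) (x : G) :
    x ∈ sqSubgroup b ∨ ∃ l, x * (b l)⁻¹ ∈ sqSubgroup b := by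
  let π := QuotientGroup.mk' (sqSubgroup b)
  have hπ_eq (y : G) : π x = π y ↔ x * y⁻¹ ∈ sqSubgroup b := by
    rw [← mul_inv_eq_one, ← map_inv, ← map_mul, ← MonoidHom.mem_ker, QuotientGroup.ker_mk']
  have hπ_sq (i : Fin 3) : π (b i) ^ 2 = 1 := by
    rw [← map_pow]
    exact (QuotientGroup.eq_one_iff _).mpr (sq_mem_sqSubgroup b i)
  have hπ_two : π (b 2) = π (b 1) * π (b 0) := by
    rw [hb, map_mul, map_mul, map_pow, hπ_sq, one_mul]
  have hx : π x ∈ closure {π (b 0), π (b 1)} := by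
    rw [← Set.image_pair, ← MonoidHom.map_closure, hgen]
    exact mem_map_of_mem π (mem_top x)
  have hx_mem := mem_of_mem_closure_pair_of_sq_eq_one (hπ_sq 0) (hπ_sq 1) (hπ_two ▸ hπ_sq 2) hx
  rw [← hπ_two, ← map_one π] at hx_mem
  rcases hx_mem with h | h | h | h
  · exact .inl (by simpa using (hπ_eq 1).mp h)
  · exact .inr ⟨0, (hπ_eq _).mp h⟩
  · exact .inr ⟨1, (hπ_eq _).mp h⟩
  · exact .inr ⟨2, (hπ_eq _).mp h⟩

theorem exists_eq_sqZPowProd_or_eq_sqZPowProd_mul (hgen : closure {b 0, b 1} = ⊤)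
    (hconj : ∀ i j, i ≠ j → SemiconjBy (b i) (b j ^ 2) (b j ^ 2)⁻¹)
    (hb : b 2 = b 0 ^ 2 * b 1 * b 0) (x : G) :
    ∃ n, x = sqZPowProd b n ∨ ∃ l, x = sqZPowProd b n * b l := by
  have hnormal : ∀ i, (zpowers (b i ^ 2)).Normal :=
    zpowers_sq_normal (S := {0, 1}) (by rwa [Set.image_pair]) hconj
  rcases mem_sqSubgroup_or_exists_mul_inv_mem hgen (sqSubgroup_normal hnormal) hb x with
    hx | ⟨l, hx⟩ <;> obtain ⟨n, hn⟩ := exists_sqZPowProd_eq hnormal hx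
  · exact ⟨n, .inl hn.symm⟩
  · exact ⟨n, .inr ⟨l, mul_inv_eq_iff_eq_mul.mp hn.symm⟩⟩

end Group

/-- The screw motions `g_{β₁}, g_{β₂}, g_{β₃}` of `P`. -/
def screw (i : Fin 3) : P :=
  .of (i.natAdd 3)

theorem screw_sq (i : Fin 3) : screw i ^ 2 = .of (ι i) := by
  have hrel : F (i.natAdd 3) * F (i.natAdd 3) * (F (ι i))⁻¹ ∈ rels := by
    fin_cases i <;> simp [rels, Fin.castLE]
  rw [sq]
  exact PresentedGroup.mk_eq_mk_of_mul_inv_mem hrel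

theorem screw_semiconjBy {i j : Fin 3} (hij : i ≠ j) :
    SemiconjBy (screw i) (screw j ^ 2) (screw j ^ 2)⁻¹ := by
  have hrel : F (i.natAdd 3) * F (ι j) * (F (i.natAdd 3))⁻¹ * (F (ι j))⁻¹⁻¹ ∈ rels := by
    rw [inv_inv]
    fin_cases i <;> fin_cases j <;> simp [rels, Fin.castLE] at hij ⊢
  rw [screw_sq]
  exact mul_inv_eq_iff_eq_mul.mp (PresentedGroup.mk_eq_mk_of_mul_inv_mem hrel)

theorem screw_two : screw 2 = screw 0 ^ 2 * screw 1 * screw 0 := by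
  have hrel : F 5 * (F 3)⁻¹ * (F 4)⁻¹ * (F 0)⁻¹ ∈ rels := by simp [rels]
  rw [screw_sq, ← mul_inv_eq_iff_eq_mul, ← mul_inv_eq_iff_eq_mul]
  exact PresentedGroup.mk_eq_mk_of_mul_inv_mem hrel

theorem closure_screw : closure {screw 0, screw 1} = ⊤ := by
  have h0 : screw 0 ∈ closure {screw 0, screw 1} := subset_closure (by simp)
  have h1 : screw 1 ∈ closure {screw 0, screw 1} := subset_closure (by simp)
  have h2 : screw 2 ∈ closure {screw 0, screw 1} := by
    rw [screw_two]
    exact mul_mem (mul_mem (pow_mem h0 2) h1) h0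
  refine eq_top_iff.mpr fun x _ ↦ PresentedGroup.generated_by rels _ (fun j ↦ ?_) x
  fin_cases j
  exacts [screw_sq 0 ▸ pow_mem h0 2, screw_sq 1 ▸ pow_mem h1 2, screw_sq 2 ▸ pow_mem h2 2,
    h0, h1, h2]

/-- The action of the generators of `P` on the `l`-th coordinate axis, with half the lattice period
as unit of length. Here `r m` stands for the translation `t ↦ t + m` and `sr m` for the reflection
`t ↦ -t - m`. -/
def axisGen : Fin 3 → Fin 6 → DihedralGroup 0 :=
  ![![r 2, 1, 1, r 1, sr 0, sr (-1)], ![1, r 2, 1, sr 0, r 1, sr (-1)],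
    ![1, 1, r 2, sr 1, sr 0, r 1]]

theorem lift_axisGen_eq_one (l : Fin 3) : ∀ w ∈ rels, FreeGroup.lift (axisGen l) w = 1 := by
  rintro w (⟨i, j, rfl⟩ | hw)
  · simp only [map_mul, map_inv, FreeGroup.lift_apply_of]
    decide +revert
  · rcases hw with rfl | rfl | rfl | rfl | rfl | rfl | rfl | rfl | rfl | rfl <;>
      simp only [map_mul, map_inv, FreeGroup.lift_apply_of] <;> decide +revert

/-- The action of `P` on the `l`-th coordinate axis, given on generators by `axisGen l`. -/
def axisHom (l : Fin 3) : P →* DihedralGroup 0 :=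
  PresentedGroup.toGroup (lift_axisGen_eq_one l)

theorem axisHom_screw_self (l : Fin 3) : axisHom l (screw l) = r 1 := by
  rw [axisHom, screw, PresentedGroup.toGroup.of]
  decide +revert

theorem axisHom_screw_sq_of_ne {l i : Fin 3} (hil : i ≠ l) : axisHom l (screw i) ^ 2 = 1 := by
  rw [axisHom, screw, PresentedGroup.toGroup.of]
  decide +revert

theorem axisHom_sqZPowProd (l : Fin 3) (n : Fin 3 → ℤ) :
    axisHom l (sqZPowProd screw n) = r 1 ^ (2 * n l) := by
  rw [map_sqZPowProd (axisHom l) (fun _ ↦ axisHom_screw_sq_of_ne), axisHom_screw_self]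

theorem not_isOfFinOrder_r_one : ¬IsOfFinOrder (r 1 : DihedralGroup 0) :=
  orderOf_eq_zero_iff.mp orderOf_r_one

/-- `P = π₁(T³/(ℤ₂ × ℤ₂))` (the fundamental group of the
Hantzsche–Wendt manifold) is torsion-free: every element of finite order is the
identity. -/
theorem torsion_free_Z2Z2 : ∀ x : P, IsOfFinOrder x → x = 1 := by
  intro x hx
  have hfin (l : Fin 3) : IsOfFinOrder (axisHom l x) := (axisHom l).isOfFinOrder hx
  obtain ⟨n, rfl | ⟨l, rfl⟩⟩ := exists_eq_sqZPowProd_or_eq_sqZPowProd_mul closure_screw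
    (fun _ _ ↦ screw_semiconjBy) screw_two x
  · have hn (l : Fin 3) : 2 * n l = 0 :=
      eq_zero_of_isOfFinOrder_zpow not_isOfFinOrder_r_one (axisHom_sqZPowProd l n ▸ hfin l)
    have hn_zero : n = 0 := funext fun l ↦ by simpa using hn l
    simp [sqZPowProd, hn_zero]
  · have hl := hfin l
    rw [map_mul, axisHom_sqZPowProd, axisHom_screw_self, ← zpow_add_one] at hl
    have hn : 2 * n l + 1 = 0 := eq_zero_of_isOfFinOrder_zpow not_isOfFinOrder_r_one hl
    omega

end TorsionFreeZ2Z2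
end
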